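/- arXiv:1812.07389 — 3 statements merged into one kernel-verified Lean document; each statement's English description precedes it below -/
import Mathlib

section
/- Fix a threshold γ2 > 0 with a2 > a1·γ2, and let c = γ2/(a2 − a1·γ2). For each ρ > 0 define the full-duplex far-user outage probability (no direct link) P(ρ) = 1 − (Ω1/(Ω1 + c·Ω_LI))·exp(−(c/(ρ·Ω1) + γ2/(ρ·Ω2))). Then P(ρ) converges as ρ → ∞ to the positive error floor c·Ω_LI/(Ω1 + c·Ω_LI); consequently the diversity order −lim_{ρ→∞} log P(ρ)/log ρ equals 0. -/
open Filter Real

/-!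
Residual self-interference scales with the transmit power, so the factor `Ω1 / (Ω1 + c * ΩLI)`
does not depend on `ρ` and stays below `1`; only the exponential factor improves, tending to `1`.
The outage probability therefore levels off at a positive value, and its logarithm stays bounded
while `log ρ → ∞`.
-/

/-- The diversity order of an outage probability `P`, as a function of the transmit SNR `ρ`, is `d`:
`P` decays like `ρ ^ (-d)` on the logarithmic scale as `ρ → ∞`. It is encoded as a limit statement
so that existence of the limit is part of the claim; it is meant for `P` eventually positive, since
`Real.log 0 = 0` would give the zero function order `0` rather than `∞`. -/
def HasDiversityOrder (P : ℝ → ℝ) (d : ℝ) : Prop :=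
  Tendsto (fun ρ : ℝ => -(Real.log (P ρ) / Real.log ρ)) atTop (nhds d)

theorem hasDiversityOrder_zero_of_tendsto {P : ℝ → ℝ} {L : ℝ} (hL : L ≠ 0)
    (hP : Tendsto P atTop (nhds L)) : HasDiversityOrder P 0 := by
  have hratio : Tendsto (fun ρ => Real.log (P ρ) / Real.log ρ) atTop (nhds 0) :=
    (hP.log hL).div_atTop tendsto_log_atTop
  simpa only [HasDiversityOrder, neg_zero] using hratio.neg

theorem tendsto_one_sub_mul_exp_neg_div_atTop (A s : ℝ) :
    Tendsto (fun ρ : ℝ => 1 - A * Real.exp (-(s / ρ))) atTop (nhds (1 - A)) := by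
  have hexponent : Tendsto (fun ρ : ℝ => -(s / ρ)) atTop (nhds 0) := by
    simpa only [id_eq, neg_zero] using (tendsto_id.const_div_atTop s).neg
  simpa only [Real.exp_zero, mul_one] using (hexponent.rexp.const_mul A).const_sub 1

/-- **FD far-user (no direct link) error floor and zero diversity order.**
The full-duplex far-user outage probability without direct link converges to the positive
error floor `c·Ω_LI/(Ω1 + c·Ω_LI)` as `ρ → ∞`, and the diversity order
`−lim_{ρ→∞} log P(ρ)/log ρ` equals `0`. -/
theorem fd_far_user_zero_diversity_no_direct
    (Ω1 Ω2 ΩLI : ℝ) (hΩ1 : 0 < Ω1) (hΩ2 : 0 < Ω2) (hΩLI : 0 < ΩLI)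
    (γ2 a1 a2 : ℝ) (hγ2 : 0 < γ2) (ha1 : 0 < a1) (ha : a1 * γ2 < a2)
    (c : ℝ) (hc : c = γ2 / (a2 - a1 * γ2))
    (P : ℝ → ℝ)
    (hP : ∀ ρ : ℝ, 0 < ρ →
      P ρ = 1 - Ω1 / (Ω1 + c * ΩLI) *
        Real.exp (-(c / (ρ * Ω1) + γ2 / (ρ * Ω2)))) :
    0 < c * ΩLI / (Ω1 + c * ΩLI) ∧
      Tendsto P atTop (nhds (c * ΩLI / (Ω1 + c * ΩLI))) ∧
      Tendsto (fun ρ : ℝ => -(Real.log (P ρ) / Real.log ρ)) atTop (nhds 0) := by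
  have hc_pos : 0 < c := hc ▸ div_pos hγ2 (sub_pos.mpr ha)
  have hden : 0 < Ω1 + c * ΩLI := by positivity
  have hfloor_pos : 0 < c * ΩLI / (Ω1 + c * ΩLI) := by positivity
  have hfloor : 1 - Ω1 / (Ω1 + c * ΩLI) = c * ΩLI / (Ω1 + c * ΩLI) := by
    rw [one_sub_div hden.ne', add_sub_cancel_left]
  have hlim : Tendsto P atTop (nhds (c * ΩLI / (Ω1 + c * ΩLI))) := by
    rw [← hfloor]
    refine (tendsto_one_sub_mul_exp_neg_div_atTop _ (c / Ω1 + γ2 / Ω2)).congr' ?_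
    filter_upwards [eventually_gt_atTop 0] with ρ hρ
    rw [hP ρ hρ, add_div, div_div, div_div, mul_comm Ω1, mul_comm Ω2]
  exact ⟨hfloor_pos, hlim, hasDiversityOrder_zero_of_tendsto hfloor_pos.ne' hlim⟩
end

section
/- Let H1 and H_LI be independent exponentially distributed random variables with means Ω1 > 0 and Ω_LI > 0, let ρ > 0, 0 < a1 < 1, and assume Ω_LI ≠ a1·Ω1. Then the full-duplex ergodic rate of the near user satisfies E[ log₂( 1 + a1·ρ·H1/(ρ·H_LI + 1) ) ] = (a1·Ω1 / (ln 2 · (Ω_LI − a1·Ω1))) · [ exp(1/(a1·ρ·Ω1))·Ei(−1/(a1·ρ·Ω1)) − exp(1/(ρ·Ω_LI))·Ei(−1/(ρ·Ω_LI)) ]. -/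
open MeasureTheory ProbabilityTheory Real

/-- The exponential integral: for `x > 0`, `Ei (-x) = -∫_x^∞ e^{-t}/t dt`. -/
noncomputable def Ei (x : ℝ) : ℝ := -∫ t in Set.Ioi (-x), Real.exp (-t) / t

/-! Write the rate as `E[log (1 + X / (Y + 1))]` with `X` and `Y` independent exponential variables
of rates `r` and `s`. Conditioning on `Y`, the tail `P(X > t (Y + 1))` is `E[exp (-r t (Y + 1))]`,
that is `exp (-r t)` times the moment generating function `s / (s + r t)` of `Y` at `-r t`. The
layer-cake formula turns the rate into `∫ P(X / (Y + 1) > t) / (1 + t) dt`, and partial fractions in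
`t` split this into two exponential integrals. -/

section ExponentialIntegral

variable {r j k : ℝ}

lemma integral_Ioi_exp_neg_div (x : ℝ) : ∫ t in Set.Ioi x, exp (-t) / t = -Ei (-x) := by
  simp only [Ei, neg_neg]

/-- For `k ≤ 0` the integrals on both sides diverge and have the default value `0`. -/
lemma integral_exp_neg_mul_div_add (hr : 0 < r) (k : ℝ) :
    ∫ t in Set.Ioi 0, exp (-(r * t)) / (t + k) = -(exp (r * k) * Ei (-(r * k))) := by
  have hpointwise (t : ℝ) : exp (-(r * t)) / (t + k)
      = exp (r * k) * r * (exp (-(r * (t + k))) / (r * (t + k))) := by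
    have hexp : exp (-(r * t)) = exp (r * k) * exp (-(r * (t + k))) := by
      rw [← exp_add]; ring_nf
    rw [hexp]
    field_simp
  have hshift : ∫ t in Set.Ioi 0, exp (-(r * (t + k))) / (r * (t + k))
      = ∫ u in Set.Ioi k, exp (-(r * u)) / (r * u) := by
    simpa using (measurePreserving_add_right volume k).setIntegral_preimage_emb
      (measurableEmbedding_addRight k) (fun u ↦ exp (-(r * u)) / (r * u)) (Set.Ioi k)
  simp_rw [hpointwise]
  rw [integral_const_mul, hshift, integral_comp_mul_left_Ioi (fun v ↦ exp (-v) / v) k hr,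
    integral_Ioi_exp_neg_div, smul_eq_mul]
  field_simp

lemma integrableOn_exp_neg_mul_div_add (hr : 0 < r) (hk : 0 < k) :
    IntegrableOn (fun t ↦ exp (-(r * t)) / (t + k)) (Set.Ioi 0) := by
  have hexp : IntegrableOn (fun t ↦ exp (-r * t) / k) (Set.Ioi 0) :=
    (integrableOn_exp_mul_Ioi (neg_lt_zero.2 hr) 0).div_const k
  refine hexp.mono' (Measurable.aestronglyMeasurable (by fun_prop)) ?_
  filter_upwards [ae_restrict_mem measurableSet_Ioi] with t (ht : 0 < t)
  rw [norm_of_nonneg (by positivity), ← neg_mul]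
  gcongr
  linarith

lemma integral_exp_neg_mul_div_add_mul_add (hr : 0 < r) (hj : 0 < j) (hk : 0 < k) (hjk : j ≠ k) :
    ∫ t in Set.Ioi 0, exp (-(r * t)) / ((t + j) * (t + k))
      = (exp (r * j) * Ei (-(r * j)) - exp (r * k) * Ei (-(r * k))) / (j - k) := by
  have hsub : j - k ≠ 0 := sub_ne_zero.2 hjk
  have hpartial : ∀ t ∈ Set.Ioi (0 : ℝ), exp (-(r * t)) / ((t + j) * (t + k))
      = (exp (-(r * t)) / (t + k) - exp (-(r * t)) / (t + j)) / (j - k) := by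
    intro t (ht : 0 < t)
    have : t + j ≠ 0 := by positivity
    have : t + k ≠ 0 := by positivity
    field_simp
    ring
  rw [setIntegral_congr_fun measurableSet_Ioi hpartial, integral_div,
    integral_sub (integrableOn_exp_neg_mul_div_add hr hk) (integrableOn_exp_neg_mul_div_add hr hj),
    integral_exp_neg_mul_div_add hr, integral_exp_neg_mul_div_add hr]
  ring

end ExponentialIntegral

section ExponentialLaw

variable {r m t x c : ℝ}

lemma expMeasure_eq_withDensity (r : ℝ) :
    expMeasure r = volume.withDensity (exponentialPDF r) := rfl

lemma ae_expMeasure_nonneg (r : ℝ) : ∀ᵐ x ∂expMeasure r, 0 ≤ x := by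
  have hIio : expMeasure r (Set.Iio 0) = 0 := by
    rw [expMeasure_eq_withDensity, withDensity_apply _ measurableSet_Iio,
      lintegral_exponentialPDF_of_nonpos le_rfl]
  filter_upwards [measure_eq_zero_iff_ae_notMem.1 hIio] with x hx
  exact not_lt.1 hx

lemma expMeasure_real_Ioi (hr : 0 < r) (hx : 0 ≤ x) :
    (expMeasure r).real (Set.Ioi x) = exp (-(r * x)) := by
  have := isProbabilityMeasure_expMeasure hr
  rw [← Set.compl_Iic, probReal_compl_eq_one_sub measurableSet_Iic, ← cdf_eq_real,
    cdf_expMeasure_eq hr, if_pos hx, sub_sub_cancel]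

lemma mgf_id_expMeasure (hr : 0 < r) (ht : t < r) : mgf id (expMeasure r) t = r / (r - t) := by
  have hdensity (x : ℝ) : (exponentialPDF r x).toReal * exp (t * x)
      = (Set.Ici 0).indicator (fun x ↦ r * exp ((t - r) * x)) x := by
    rcases le_or_gt 0 x with hx | hx
    · rw [exponentialPDF_of_nonneg hx, ENNReal.toReal_ofReal (by positivity),
        Set.indicator_of_mem (Set.mem_Ici.2 hx), mul_assoc, ← exp_add]
      ring_nf
    · rw [exponentialPDF_of_neg hx, Set.indicator_of_notMem (Set.notMem_Ici.2 hx),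
        ENNReal.toReal_zero, zero_mul]
  have hpdf : Measurable (exponentialPDF r) := (measurable_exponentialPDFReal r).ennreal_ofReal
  have hfin : ∀ᵐ x, exponentialPDF r x < ⊤ := .of_forall fun _ ↦ ENNReal.ofReal_lt_top
  simp only [mgf, id, expMeasure_eq_withDensity]
  rw [integral_withDensity_eq_integral_toReal_smul hpdf hfin]
  simp only [smul_eq_mul, hdensity]
  rw [integral_indicator measurableSet_Ici, integral_Ici_eq_integral_Ioi, integral_const_mul,
    integral_exp_mul_Ioi (sub_neg.2 ht), mul_zero, exp_zero, ← neg_sub r t, neg_div_neg_eq,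
    mul_one_div]

variable {Ω : Type*} [MeasurableSpace Ω] {μ : Measure Ω} {X Y : Ω → ℝ}

lemma hasLaw_expMeasure_of_measure_gt [IsProbabilityMeasure μ] (hX : AEMeasurable X μ) (hr : 0 < r)
    (htail : ∀ t : ℝ, 0 ≤ t → μ {ω | X ω > t} = ENNReal.ofReal (exp (-(r * t)))) :
    HasLaw X (expMeasure r) μ := by
  have := isProbabilityMeasure_expMeasure hr
  have := Measure.isProbabilityMeasure_map hX
  have hcdf (t : ℝ) (ht : 0 ≤ t) : cdf (μ.map X) t = 1 - exp (-(r * t)) := by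
    have hIoi : (μ.map X).real (Set.Ioi t) = exp (-(r * t)) := by
      rw [map_measureReal_apply_of_aemeasurable hX measurableSet_Ioi, measureReal_def]
      exact (congrArg _ (htail t ht)).trans (ENNReal.toReal_ofReal (exp_pos _).le)
    rw [cdf_eq_real, ← Set.compl_Ioi, probReal_compl_eq_one_sub measurableSet_Ioi, hIoi]
  refine ⟨hX, Measure.eq_of_cdf _ _ (StieltjesFunction.ext fun t ↦ ?_)⟩
  rw [cdf_expMeasure_eq hr]
  split_ifs with ht
  · exact hcdf t ht
  · refine le_antisymm ?_ (cdf_nonneg _ _)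
    calc cdf (μ.map X) t ≤ cdf (μ.map X) 0 := monotone_cdf _ (not_le.1 ht).le
      _ = 0 := by simp [hcdf]

lemma hasLaw_expMeasure_inv_of_measure_gt [IsProbabilityMeasure μ] (hX : AEMeasurable X μ)
    (hm : 0 < m)
    (htail : ∀ t : ℝ, 0 ≤ t → μ {ω | X ω > t} = ENNReal.ofReal (exp (-(t / m)))) :
    HasLaw X (expMeasure m⁻¹) μ :=
  hasLaw_expMeasure_of_measure_gt hX (inv_pos.2 hm) (by simpa only [div_eq_inv_mul] using htail)

lemma hasLaw_const_mul_expMeasure (hc : 0 < c) (hr : 0 < r) (hX : HasLaw X (expMeasure r) μ) :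
    HasLaw (fun ω ↦ c * X ω) (expMeasure (r / c)) μ := by
  have := isProbabilityMeasure_expMeasure hr
  have := hX.isProbabilityMeasure
  refine hasLaw_expMeasure_of_measure_gt (hX.aemeasurable.const_mul c) (by positivity) fun t ht ↦ ?_
  simp only [gt_iff_lt, ← div_lt_iff₀' hc]
  calc μ {ω | t / c < X ω} = expMeasure r (Set.Ioi (t / c)) := hX.measure_eq measurableSet_Ioi
    _ = ENNReal.ofReal (exp (-(r / c * t))) := by
      rw [← ofReal_measureReal, expMeasure_real_Ioi hr (by positivity), div_mul_eq_mul_div,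
        mul_div_assoc]

lemma measureReal_lt_eq_mgf_neg (hr : 0 < r) (hX : HasLaw X (expMeasure r) μ)
    (hY : AEMeasurable Y μ) (hY0 : 0 ≤ᵐ[μ] Y) (hXY : IndepFun X Y μ) :
    μ.real {ω | Y ω < X ω} = mgf Y μ (-r) := by
  have := isProbabilityMeasure_expMeasure hr
  have := hX.isProbabilityMeasure
  have := Measure.isProbabilityMeasure_map hY
  have hlaw : HasLaw (fun ω ↦ (Y ω, X ω)) ((μ.map Y).prod (expMeasure r)) μ :=
    hXY.symm.hasLaw_prod ⟨hY, rfl⟩ hX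
  have hlt : MeasurableSet {p : ℝ × ℝ | p.1 < p.2} := measurableSet_lt measurable_fst measurable_snd
  have hfiber : ∀ᵐ y ∂μ.map Y, (expMeasure r).real (Set.Ioi y) = exp (-r * y) := by
    filter_upwards [(ae_map_iff hY measurableSet_Ici).2 hY0] with y hy
    rw [expMeasure_real_Ioi hr hy, neg_mul]
  calc μ.real {ω | Y ω < X ω}
      = ((μ.map Y).prod (expMeasure r)).real {p | p.1 < p.2} := hlaw.measureReal_eq hlt
    _ = ∫ y, (expMeasure r).real (Set.Ioi y) ∂μ.map Y := by
      rw [measureReal_def, Measure.prod_apply hlt]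
      exact (integral_toReal (measurable_measure_prodMk_left hlt).aemeasurable
        (.of_forall fun _ ↦ measure_lt_top _ _)).symm
    _ = ∫ y, exp (-r * y) ∂μ.map Y := integral_congr_ae hfiber
    _ = mgf Y μ (-r) := by
      rw [mgf, integral_map hY (by fun_prop)]

end ExponentialLaw

lemma integral_inv_add_one {x : ℝ} (hx : 0 ≤ x) : ∫ t in 0..x, (t + 1)⁻¹ = log (1 + x) := by
  rw [intervalIntegral.integral_comp_add_right (fun t : ℝ ↦ t⁻¹), zero_add,
    integral_inv_of_pos one_pos (by positivity), div_one, add_comm]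

lemma integral_log_one_add_eq_integral_meas_lt {Ω : Type*} [MeasurableSpace Ω] {μ : Measure Ω}
    [IsFiniteMeasure μ] {f : Ω → ℝ} (hf0 : 0 ≤ᵐ[μ] f) (hf : AEMeasurable f μ) :
    ∫ ω, log (1 + f ω) ∂μ = ∫ t in Set.Ioi 0, μ.real {ω | t < f ω} / (t + 1) := by
  have hlog0 : 0 ≤ᵐ[μ] fun ω ↦ log (1 + f ω) := by
    filter_upwards [hf0] with ω hω
    exact log_nonneg (le_add_of_nonneg_right hω)
  have htail0 : 0 ≤ᵐ[volume.restrict (Set.Ioi 0)] fun t ↦ μ.real {ω | t < f ω} / (t + 1) := by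
    filter_upwards [ae_restrict_mem measurableSet_Ioi] with t (ht : 0 < t)
    exact div_nonneg measureReal_nonneg (by positivity)
  have htail_meas : Measurable fun t ↦ μ.real {ω | t < f ω} :=
    Antitone.measurable fun _ _ hst ↦ measureReal_mono fun _ ↦ hst.trans_lt
  have hint : ∀ x > 0, IntervalIntegrable (fun t : ℝ ↦ (t + 1)⁻¹) volume 0 x := by
    intro x hx
    refine ContinuousOn.intervalIntegrable (ContinuousOn.inv₀ (by fun_prop) fun t ht ↦ ?_)
    rw [Set.uIcc_of_le hx.le] at ht
    linarith [ht.1]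
  have hinv0 : ∀ᵐ t ∂volume.restrict (Set.Ioi (0 : ℝ)), 0 ≤ (t + 1)⁻¹ := by
    filter_upwards [ae_restrict_mem measurableSet_Ioi] with t (ht : 0 < t)
    positivity
  rw [integral_eq_lintegral_of_nonneg_ae hlog0 (hf.const_add 1).log.aestronglyMeasurable,
    integral_eq_lintegral_of_nonneg_ae htail0
      (htail_meas.div (by fun_prop)).aestronglyMeasurable]
  congr 1
  calc ∫⁻ ω, ENNReal.ofReal (log (1 + f ω)) ∂μ
      = ∫⁻ ω, ENNReal.ofReal (∫ t in 0..f ω, (t + 1)⁻¹) ∂μ := by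
        refine lintegral_congr_ae ?_
        filter_upwards [hf0] with ω hω
        rw [integral_inv_add_one hω]
    _ = ∫⁻ t in Set.Ioi 0, μ {ω | t < f ω} * ENNReal.ofReal (t + 1)⁻¹ :=
        lintegral_comp_eq_lintegral_meas_lt_mul μ hf0 hf hint hinv0
    _ = ∫⁻ t in Set.Ioi 0, ENNReal.ofReal (μ.real {ω | t < f ω} / (t + 1)) := by
        simp only [div_eq_mul_inv, ENNReal.ofReal_mul measureReal_nonneg, ofReal_measureReal,
          ne_eq, measure_ne_top, not_false_eq_true]

section SignalToInterference

variable {Ω : Type*} [MeasurableSpace Ω] {μ : Measure Ω} {X Y : Ω → ℝ} {r s t : ℝ}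

lemma measureReal_lt_div_add_one (hr : 0 < r) (hs : 0 < s) (hX : HasLaw X (expMeasure r) μ)
    (hY : HasLaw Y (expMeasure s) μ) (hXY : IndepFun X Y μ) (ht : 0 ≤ t) :
    μ.real {ω | t < X ω / (Y ω + 1)} = exp (-(r * t)) * (s / (s + r * t)) := by
  have hY0 : ∀ᵐ ω ∂μ, 0 ≤ Y ω := (hY.ae_iff (by fun_prop)).2 (ae_expMeasure_nonneg s)
  have hset : {ω | t < X ω / (Y ω + 1)} =ᵐ[μ] {ω | t * (Y ω + 1) < X ω} := by
    filter_upwards [hY0] with ω hω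
    exact propext (lt_div_iff₀ (by positivity))
  have hnonneg : 0 ≤ᵐ[μ] fun ω ↦ t * (Y ω + 1) := by
    filter_upwards [hY0] with ω hω
    exact mul_nonneg ht (by positivity)
  have hindep : IndepFun X (fun ω ↦ t * (Y ω + 1)) μ :=
    hXY.comp (ψ := fun y ↦ t * (y + 1)) measurable_id (by fun_prop)
  have hmgf : mgf Y μ (-(r * t)) = s / (s + r * t) := by
    rw [← mgf_id_map hY.aemeasurable, hY.map_eq, mgf_id_expMeasure hs, sub_neg_eq_add]
    linarith [mul_nonneg hr.le ht]
  rw [measureReal_congr hset, measureReal_lt_eq_mgf_neg hr hX (by fun_prop) hnonneg hindep,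
    mgf_const_mul, mgf_add_const, mul_neg, mul_comm t r, hmgf, mul_one, mul_comm]

lemma integral_log_one_add_div_add_one (hr : 0 < r) (hs : 0 < s) (hrs : r ≠ s)
    (hX : HasLaw X (expMeasure r) μ) (hY : HasLaw Y (expMeasure s) μ) (hXY : IndepFun X Y μ) :
    ∫ ω, log (1 + X ω / (Y ω + 1)) ∂μ
      = s / (r - s) * (exp r * Ei (-r) - exp s * Ei (-s)) := by
  have := isProbabilityMeasure_expMeasure hr
  have := hX.isProbabilityMeasure
  have hnonneg : 0 ≤ᵐ[μ] fun ω ↦ X ω / (Y ω + 1) := by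
    filter_upwards [(hX.ae_iff (by fun_prop)).2 (ae_expMeasure_nonneg r),
      (hY.ae_iff (by fun_prop)).2 (ae_expMeasure_nonneg s)] with ω hx hy
    exact div_nonneg hx (by positivity)
  have htail : ∀ t ∈ Set.Ioi (0 : ℝ), μ.real {ω | t < X ω / (Y ω + 1)} / (t + 1)
      = s / r * (exp (-(r * t)) / ((t + s / r) * (t + 1))) := by
    intro t (ht : 0 < t)
    rw [measureReal_lt_div_add_one hr hs hX hY hXY ht.le]
    field_simp
    ring
  have hsr : s / r ≠ 1 := fun h ↦ hrs ((div_eq_one_iff_eq hr.ne').1 h).symm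
  rw [integral_log_one_add_eq_integral_meas_lt hnonneg (by fun_prop),
    setIntegral_congr_fun measurableSet_Ioi htail, integral_const_mul,
    integral_exp_neg_mul_div_add_mul_add hr (by positivity) one_pos hsr, mul_div_cancel₀ _ hr.ne',
    mul_one]
  have := sub_ne_zero.2 hrs
  have := sub_ne_zero.2 hrs.symm
  field_simp
  ring

end SignalToInterference

theorem fd_near_user_ergodic_rate_general
    {Ω : Type*} [MeasurableSpace Ω] {μ : Measure Ω} {H1 HLI : Ω → ℝ} {Ω1 ΩLI ρ a1 : ℝ}
    (hΩ1 : 0 < Ω1) (hΩLI : 0 < ΩLI)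
    (hH1 : HasLaw H1 (expMeasure Ω1⁻¹) μ) (hHLI : HasLaw HLI (expMeasure ΩLI⁻¹) μ)
    (hIndep : IndepFun H1 HLI μ) (hρ : 0 < ρ) (ha1 : 0 < a1) (hne : ΩLI ≠ a1 * Ω1) :
    ∫ ω, Real.logb 2 (1 + a1 * ρ * H1 ω / (ρ * HLI ω + 1)) ∂μ
      = a1 * Ω1 / (Real.log 2 * (ΩLI - a1 * Ω1)) *
        (Real.exp (1 / (a1 * ρ * Ω1)) * Ei (-(1 / (a1 * ρ * Ω1)))
          - Real.exp (1 / (ρ * ΩLI)) * Ei (-(1 / (ρ * ΩLI)))) := by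
  have hX := hasLaw_const_mul_expMeasure (mul_pos ha1 hρ) (inv_pos.2 hΩ1) hH1
  have hY := hasLaw_const_mul_expMeasure hρ (inv_pos.2 hΩLI) hHLI
  have hXY : IndepFun (fun ω ↦ a1 * ρ * H1 ω) (fun ω ↦ ρ * HLI ω) μ :=
    hIndep.comp (measurable_const_mul (a1 * ρ)) (measurable_const_mul ρ)
  have hrate1 : Ω1⁻¹ / (a1 * ρ) = 1 / (a1 * ρ * Ω1) := by field_simp
  have hrateLI : ΩLI⁻¹ / ρ = 1 / (ρ * ΩLI) := by field_simp
  rw [hrate1] at hX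
  rw [hrateLI] at hY
  have hsub : ΩLI - a1 * Ω1 ≠ 0 := sub_ne_zero.2 hne
  have hrate_ne : 1 / (a1 * ρ * Ω1) ≠ 1 / (ρ * ΩLI) := by
    rw [ne_eq, one_div, one_div, inv_inj]
    exact fun h ↦ hne (mul_left_cancel₀ hρ.ne' (by linarith))
  have hcoeff : 1 / (ρ * ΩLI) / (1 / (a1 * ρ * Ω1) - 1 / (ρ * ΩLI))
      = a1 * Ω1 / (ΩLI - a1 * Ω1) := by
    field_simp
  simp only [logb]
  rw [integral_div, integral_log_one_add_div_add_one (by positivity) (by positivity) hrate_ne hX hY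
    hXY, hcoeff, mul_div_right_comm, div_div, mul_comm (log 2)]

/-- **FD near-user ergodic rate (Theorem 3).**
If `H1` and `HLI` are independent exponential random variables with means `Ω1` and `ΩLI`,
then the full-duplex ergodic rate of the near user has the stated closed form. -/
theorem fd_near_user_ergodic_rate
    {Ω : Type*} [MeasurableSpace Ω] (μ : Measure Ω) [IsProbabilityMeasure μ]
    (H1 HLI : Ω → ℝ) (hH1m : Measurable H1) (hHLIm : Measurable HLI)
    (Ω1 ΩLI : ℝ) (hΩ1 : 0 < Ω1) (hΩLI : 0 < ΩLI)
    (hH1 : ∀ t : ℝ, 0 ≤ t → μ {ω | H1 ω > t} = ENNReal.ofReal (Real.exp (-(t / Ω1))))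
    (hHLI : ∀ t : ℝ, 0 ≤ t → μ {ω | HLI ω > t} = ENNReal.ofReal (Real.exp (-(t / ΩLI))))
    (hIndep : IndepFun H1 HLI μ)
    (ρ a1 : ℝ) (hρ : 0 < ρ) (ha1 : 0 < a1) (ha1' : a1 < 1)
    (hne : ΩLI ≠ a1 * Ω1) :
    ∫ ω, Real.logb 2 (1 + a1 * ρ * H1 ω / (ρ * HLI ω + 1)) ∂μ
      = a1 * Ω1 / (Real.log 2 * (ΩLI - a1 * Ω1)) *
        (Real.exp (1 / (a1 * ρ * Ω1)) * Ei (-(1 / (a1 * ρ * Ω1)))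
          - Real.exp (1 / (ρ * ΩLI)) * Ei (-(1 / (ρ * ΩLI)))) := by
  exact fd_near_user_ergodic_rate_general hΩ1 hΩLI
    (hasLaw_expMeasure_inv_of_measure_gt hH1m.aemeasurable hΩ1 hH1)
    (hasLaw_expMeasure_inv_of_measure_gt hHLIm.aemeasurable hΩLI hHLI) hIndep hρ ha1 hne
end

section
/- Let Ω1 > 0, a1 ∈ (0,1), and for ρ > 0 define R(ρ) = −( exp(1/(a1·ρ·Ω1)) / (2 ln 2) ) · Ei(−1/(a1·ρ·Ω1)) (the half-duplex ergodic rate of the near user). Then lim_{ρ→∞} R(ρ)/log₂ ρ = 1/2, i.e. the high-SNR slope of the near user in half-duplex NOMA equals 1/2. -/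
open MeasureTheory Filter Real

/-!
The increments of `Ei (-x) - log x` are integrals of `(e^{-t} - 1) / t`, which is bounded by `1` in
absolute value. So this difference stays bounded as `x → 0⁺`, whereas `log x → -∞`, and therefore
`e^x Ei (-x) ∼ log x`. At `x = 1 / (a1 ρ Ω1)` this is `∼ -log ρ`, and the prefactor `-1 / (2 log 2)`
leaves half of `log₂ ρ`.
-/

section

open Asymptotics Topology

lemma abs_exp_neg_sub_one_div_le_one {t : ℝ} (ht : 0 < t) : |(exp (-t) - 1) / t| ≤ 1 := by
  have hexp_le : exp (-t) ≤ 1 := exp_le_one_iff.2 (by linarith)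
  rw [abs_div, abs_of_pos ht, div_le_one ht, abs_of_nonpos (by linarith)]
  linarith [one_sub_le_exp_neg t]

lemma integrableOn_exp_neg_div_Ioi {x : ℝ} (hx : 0 < x) :
    IntegrableOn (fun t : ℝ => exp (-t) / t) (Set.Ioi x) := by
  refine ((integrableOn_exp_neg_Ioi x).const_mul x⁻¹).mono'
    (Measurable.aestronglyMeasurable (by fun_prop)) ?_
  filter_upwards [ae_restrict_mem measurableSet_Ioi] with t (hxt : x < t)
  have ht : 0 < t := hx.trans hxt
  rw [norm_of_nonneg (by positivity), div_eq_inv_mul]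
  gcongr

lemma intervalIntegrable_exp_neg_div {x y : ℝ} (hx : 0 < x) (hy : 0 < y) :
    IntervalIntegrable (fun t : ℝ => exp (-t) / t) volume x y :=
  (ContinuousOn.div (by fun_prop) (by fun_prop)
    fun _ ht => ((lt_min hx hy).trans_le ht.1).ne').intervalIntegrable

lemma Ei_neg_sub_Ei_neg {x y : ℝ} (hx : 0 < x) (hy : 0 < y) :
    Ei (-x) - Ei (-y) = ∫ t in y..x, exp (-t) / t := by
  have hsplit := intervalIntegral.integral_interval_add_Ioi
    (integrableOn_exp_neg_div_Ioi hy) (integrableOn_exp_neg_div_Ioi hx)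
  simp only [Ei, neg_neg]
  linarith

lemma Ei_neg_sub_log_sub_Ei_neg_sub_log {x y : ℝ} (hx : 0 < x) (hy : 0 < y) :
    (Ei (-x) - log x) - (Ei (-y) - log y) = ∫ t in y..x, (exp (-t) - 1) / t := by
  have hlog : log x - log y = ∫ t in y..x, 1 / t := by
    rw [integral_one_div_of_pos hy hx, log_div hx.ne' hy.ne']
  have hinv : IntervalIntegrable (fun t : ℝ => 1 / t) volume y x :=
    intervalIntegral.intervalIntegrable_one_div
      (fun t ht => ((lt_min hy hx).trans_le ht.1).ne') continuousOn_id
  simp only [sub_div]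
  rw [intervalIntegral.integral_sub (intervalIntegrable_exp_neg_div hy hx) hinv, ← hlog,
    ← Ei_neg_sub_Ei_neg hx hy]
  ring

lemma lipschitzOnWith_Ei_neg_sub_log :
    LipschitzOnWith 1 (fun x : ℝ => Ei (-x) - log x) (Set.Ioi 0) := by
  refine LipschitzOnWith.of_dist_le_mul fun x hx y hy => ?_
  rw [dist_eq_norm, Ei_neg_sub_log_sub_Ei_neg_sub_log hx hy, dist_eq]
  exact intervalIntegral.norm_integral_le_of_norm_le_const fun t ht =>
    abs_exp_neg_sub_one_div_le_one ((lt_min hy hx).trans ht.1)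

lemma isBigO_Ei_neg_sub_log :
    (fun x : ℝ => Ei (-x) - log x) =O[𝓝[>] 0] (fun _ => (1 : ℝ)) := by
  refine IsBigO.of_bound (1 + |Ei (-1)|) ?_
  filter_upwards [Ioo_mem_nhdsGT one_pos] with x ⟨hx_pos, hx_lt_one⟩
  have hlip : |(Ei (-x) - log x) - Ei (-1)| ≤ |x - 1| := by
    simpa only [dist_eq, log_one, sub_zero, NNReal.coe_one, one_mul] using
      lipschitzOnWith_Ei_neg_sub_log.dist_le_mul x hx_pos 1 (Set.mem_Ioi.2 one_pos)
  have hdist : |x - 1| ≤ 1 := by rw [abs_le]; constructor <;> linarith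
  rw [norm_one, mul_one, norm_eq_abs]
  linarith [abs_sub_abs_le_abs_sub (Ei (-x) - log x) (Ei (-1))]

lemma isEquivalent_Ei_neg_log : (fun x : ℝ => Ei (-x)) ~[𝓝[>] 0] log :=
  isBigO_Ei_neg_sub_log.trans_isLittleO <|
    isLittleO_const_left.2 <| .inr <| tendsto_abs_atBot_atTop.comp tendsto_log_nhdsGT_zero

lemma isEquivalent_exp_mul_Ei_neg_log :
    (fun x : ℝ => exp x * Ei (-x)) ~[𝓝[>] 0] log := by
  have hexp : exp ~[𝓝[>] 0] Function.const ℝ 1 := by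
    rw [isEquivalent_const_iff_tendsto one_ne_zero, ← exp_zero]
    exact (continuous_exp.tendsto 0).mono_left nhdsWithin_le_nhds
  exact (hexp.mul isEquivalent_Ei_neg_log).congr_right (.of_eq (one_mul log))

lemma isEquivalent_log_const_mul {c : ℝ} (hc : c ≠ 0) :
    (fun x : ℝ => log (c * x)) ~[atTop] log := by
  have hadd : (fun x : ℝ => log x + log c) ~[atTop] log :=
    IsEquivalent.refl.add_isLittleO isLittleO_const_log_atTop
  refine hadd.congr_left ?_
  filter_upwards [eventually_ne_atTop 0] with x hx
  rw [log_mul hc hx, add_comm]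

lemma isEquivalent_exp_mul_Ei_neg_one_div {c : ℝ} (hc : 0 < c) :
    (fun x : ℝ => exp (1 / (c * x)) * Ei (-(1 / (c * x)))) ~[atTop] (fun x => -log x) := by
  have harg : Tendsto (fun x : ℝ => 1 / (c * x)) atTop (𝓝[>] 0) := by
    simp only [one_div]
    exact tendsto_inv_atTop_nhdsGT_zero.comp (tendsto_id.const_mul_atTop hc)
  have hlog (x : ℝ) : log (1 / (c * x)) = -log (c * x) := by rw [one_div, log_inv]
  exact (isEquivalent_exp_mul_Ei_neg_log.comp_tendsto harg).trans <|
    (isEquivalent_log_const_mul hc.ne').neg.congr_left (.of_forall fun x => (hlog x).symm)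

theorem hd_near_user_high_snr_slope_general
    (Ω1 : ℝ) (hΩ1 : 0 < Ω1) (a1 : ℝ) (ha1 : 0 < a1)
    (R : ℝ → ℝ)
    (hR : ∀ ρ : ℝ, 0 < ρ →
      R ρ = -(Real.exp (1 / (a1 * ρ * Ω1)) / (2 * Real.log 2)) *
          Ei (-(1 / (a1 * ρ * Ω1)))) :
    Tendsto (fun ρ : ℝ => R ρ / Real.logb 2 ρ) atTop (𝓝 (1 / 2)) := by
  have hlog_ne : ∀ᶠ ρ : ℝ in atTop, -log ρ ≠ 0 := by
    filter_upwards [eventually_gt_atTop 1] with ρ hρ using neg_ne_zero.2 (log_pos hρ).ne'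
  have hratio : Tendsto
      (fun ρ => exp (1 / (a1 * Ω1 * ρ)) * Ei (-(1 / (a1 * Ω1 * ρ))) / -log ρ) atTop (𝓝 1) :=
    (isEquivalent_iff_tendsto_one hlog_ne).1
      (isEquivalent_exp_mul_Ei_neg_one_div (mul_pos ha1 hΩ1))
  refine (hratio.div_const 2).congr' ?_
  filter_upwards [eventually_gt_atTop 0] with ρ hρ
  have hlog2 : log 2 ≠ 0 := (log_pos one_lt_two).ne'
  rw [hR ρ hρ, mul_right_comm a1 ρ Ω1, logb]
  field_simp

end

/-- **High-SNR slope of the HD near user equals `1/2`.**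
For the half-duplex ergodic rate `R(ρ) = −(exp(1/(a1 ρ Ω1))/(2 ln 2))·Ei(−1/(a1 ρ Ω1))`,
one has `R(ρ)/log₂ ρ → 1/2` as `ρ → ∞`. -/
theorem hd_near_user_high_snr_slope
    (Ω1 : ℝ) (hΩ1 : 0 < Ω1) (a1 : ℝ) (ha1 : 0 < a1) (ha1' : a1 < 1)
    (R : ℝ → ℝ)
    (hR : ∀ ρ : ℝ, 0 < ρ →
      R ρ = -(Real.exp (1 / (a1 * ρ * Ω1)) / (2 * Real.log 2)) *
          Ei (-(1 / (a1 * ρ * Ω1)))) :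
    Tendsto (fun ρ : ℝ => R ρ / Real.logb 2 ρ) atTop (nhds (1 / 2)) := by
  exact hd_near_user_high_snr_slope_general Ω1 hΩ1 a1 ha1 R hR
end
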